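/- For every nonnegative integer n, ped(225n + 133) ≡ 0 (mod 24). -/

import Mathlib

/-- `ped n` is the number of partitions of `n` in which the even parts are
distinct (and the odd parts are unrestricted). -/
def ped (n : ℕ) : ℕ :=
  Fintype.card {p : n.Partition // ∀ x ∈ p.parts, Even x → p.parts.count x ≤ 1}

/-!
Let `P(q) = ∑ (-1) ^ n * ped n * q ^ n`, and let `φ` and `ψ` be Ramanujan's theta functions.
Gauss's product formulas for `φ` and `ψ` are limits of finite identities due to Shanks (*Two
theorems of Gauss*, 1958), and they give `P * φ = ψ`.

Modulo `3`, write `θ = q d/dq`. Sorting the exponents by their residues gives `θ φ = φ - φ ^ 9` and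
`θ ψ = q * ψ ^ 9`. Multiplication by a cube root of unity permutes the nonzero Hurwitz quaternions
without fixed points, so the theta series of the Hurwitz order is `1`; with `Ψ = 2 * ψ` and
`Ψ ^ 2 = 2 * φ * Ψ(q ^ 2)` this says `q * ψ ^ 8 = φ ^ 4 - φ ^ 8`. Together these relations yield
`θ (θ P) + θ P = q * ψ ^ 9 * φ ^ 3 = q * ψ(q ^ 9) * φ(q ^ 3)`. No exponent on the right is `7`
modulo `9`, whereas `n ^ 2 + n = 2` modulo `3` for such `n`, and hence `3 ∣ ped n`.

Modulo `8`, put `φ = 1 + 2 * S`. Then `P = ψ - 2 * ψ * S + 4 * ψ * S ^ 2`, and `S ^ 2 = S(q ^ 2)`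
modulo `2`, so that `8 ∣ ped n` as soon as `8 * n + 1` is represented neither by `x ^ 2 + 8 * y ^ 2`
nor by `x ^ 2 + 16 * y ^ 2`. When `n` is `133` modulo `225`, the prime `5` is an obstruction to the
first form and the prime `3` to the second.
-/

open PowerSeries Function

section Weights
variable {ι κ : Type*}

theorem northcott_of_le_monotone_comp {v w : ι → ℕ} (hv : Northcott v) {g : ℕ → ℕ}
    (hg : Monotone g) (h : ∀ i, v i ≤ g (w i)) : Northcott w where
  finite_le b := (hv.finite_le (g b)).subset fun i hi => (h i).trans (hg hi)

theorem northcott_const_mul {w : ι → ℕ} (hw : Northcott w) {m : ℕ} (hm : m ≠ 0) :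
    Northcott fun i => m * w i :=
  northcott_of_le_monotone_comp hw monotone_id fun _ =>
    Nat.le_mul_of_pos_left _ (Nat.pos_of_ne_zero hm)

theorem northcott_comp_injective {w : ι → ℕ} (hw : Northcott w) {a : κ → ι} (ha : Injective a) :
    Northcott fun k => w (a k) where
  finite_le b := (hw.finite_le b).preimage ha.injOn

theorem northcott_add {v : ι → ℕ} {w : κ → ℕ} (hv : Northcott v) (hw : Northcott w) :
    Northcott fun p : ι × κ => v p.1 + w p.2 where
  finite_le b := ((hv.finite_le b).prod (hw.finite_le b)).subset fun _ (hp : _ + _ ≤ b) =>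
    ⟨(Nat.le_add_right _ _).trans hp, (Nat.le_add_left _ _).trans hp⟩

theorem finite_fiber_of_northcott {w : ι → ℕ} (hw : Northcott w) (n : ℕ) : Finite {i // w i = n} :=
  ((hw.finite_le n).subset fun _ hi => le_of_eq hi).to_subtype

/-- Pairs of a given total weight, sorted by the weights of their entries. -/
def fiberAddEquiv (v : ι → ℕ) (w : κ → ℕ) (n : ℕ) :
    {p : ι × κ // v p.1 + w p.2 = n} ≃
      Σ a : Finset.HasAntidiagonal.antidiagonal n, {i // v i = a.1.1} × {k // w k = a.1.2} where
  toFun p := ⟨⟨(v p.1.1, w p.1.2), by simpa using p.2⟩, ⟨p.1.1, rfl⟩, ⟨p.1.2, rfl⟩⟩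
  invFun s := ⟨(s.2.1.1, s.2.2.1), by
    rw [s.2.1.2, s.2.2.2]; exact Finset.HasAntidiagonal.mem_antidiagonal.1 s.1.2⟩
  left_inv _ := rfl
  right_inv := by
    rintro ⟨⟨⟨a, b⟩, h⟩, ⟨i, rfl : v i = a⟩, ⟨k, rfl : w k = b⟩⟩
    rfl

end Weights

/-- The power series `∑ i, X ^ w i`, which counts the elements of `ι` by their weight `w`. A weight
attained infinitely often contributes `0`. -/
noncomputable def countSeries (R : Type*) [Semiring R] {ι : Type*} (w : ι → ℕ) : R⟦X⟧ :=
  PowerSeries.mk fun n => (Nat.card {i // w i = n} : R)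

section CountSeries
variable {R : Type*} [CommSemiring R] {ι κ μ : Type*}

theorem coeff_countSeries (w : ι → ℕ) (n : ℕ) :
    coeff n (countSeries R w) = (Nat.card {i // w i = n} : R) := coeff_mk _ _

theorem coeff_countSeries_eq_zero {w : ι → ℕ} {n : ℕ} (h : ∀ i, w i ≠ n) :
    coeff n (countSeries R w) = 0 := by
  have : IsEmpty {i // w i = n} := ⟨fun i => h i.1 i.2⟩
  simp [coeff_countSeries]

theorem map_countSeries {S : Type*} [CommSemiring S] (f : R →+* S) (w : ι → ℕ) :
    PowerSeries.map f (countSeries R w) = countSeries S w := by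
  ext n
  simp [coeff_countSeries]

theorem countSeries_comp_equiv (w : ι → ℕ) (e : κ ≃ ι) :
    countSeries R (fun k => w (e k)) = countSeries R w := by
  ext n
  rw [coeff_countSeries, coeff_countSeries,
    Nat.card_congr (e.subtypeEquiv (q := fun i => w i = n) fun _ => Iff.rfl)]

theorem countSeries_eq_X_pow [Unique ι] (w : ι → ℕ) : countSeries R w = X ^ w default := by
  ext n
  rw [coeff_X_pow]
  split_ifs with h
  · have : Unique {i // w i = n} :=
      ⟨⟨⟨default, h.symm⟩⟩, fun _ => Subtype.ext (Subsingleton.elim _ _)⟩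
    simp [coeff_countSeries]
  · exact coeff_countSeries_eq_zero fun i hi => h (by rw [← hi, Subsingleton.elim i default])

theorem countSeries_mul {v : ι → ℕ} {w : κ → ℕ} (hv : Northcott v) (hw : Northcott w) :
    countSeries R v * countSeries R w = countSeries R fun p : ι × κ => v p.1 + w p.2 := by
  ext n
  have := finite_fiber_of_northcott hv
  have := finite_fiber_of_northcott hw
  rw [coeff_countSeries, Nat.card_congr (fiberAddEquiv v w n), Nat.card_sigma, coeff_mul]
  simp only [Nat.card_prod, coeff_countSeries]
  rw [Finset.sum_coe_sort (Finset.HasAntidiagonal.antidiagonal n)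
    fun a => Nat.card {i // v i = a.1} * Nat.card {k // w k = a.2}]
  push_cast
  rfl

theorem X_mul_countSeries (w : ι → ℕ) :
    X * countSeries R w = countSeries R fun i => w i + 1 := by
  ext n
  cases n with
  | zero => simp [coeff_countSeries]
  | succ n => simp [coeff_succ_X_mul, coeff_countSeries]

theorem countSeries_eq_add {w : ι → ℕ} (hw : Northcott w) {a : κ → ι} {b : μ → ι}
    (hab : Bijective (Sum.elim a b)) :
    countSeries R w = countSeries R (fun k => w (a k)) + countSeries R fun m => w (b m) := by
  ext n
  have ha := finite_fiber_of_northcott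
    (northcott_comp_injective hw (hab.injective.comp Sum.inl_injective)) n
  have hb := finite_fiber_of_northcott
    (northcott_comp_injective hw (hab.injective.comp Sum.inr_injective)) n
  rw [← countSeries_comp_equiv w (Equiv.ofBijective _ hab), map_add, coeff_countSeries,
    coeff_countSeries, coeff_countSeries, ← Nat.cast_add]
  exact congrArg Nat.cast ((Nat.card_congr Equiv.subtypeSum).trans (@Nat.card_sum _ _ ha hb))

theorem countSeries_eq_add_compl_range {w : ι → ℕ} (hw : Northcott w) {a : κ → ι}
    (ha : Injective a) :
    countSeries R w = countSeries R (fun k => w (a k)) +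
      countSeries R fun i : ↥(Set.range a)ᶜ => w i := by
  refine countSeries_eq_add hw ⟨ha.sumElim Subtype.val_injective ?_, ?_⟩
  · rintro k ⟨i, hi⟩ rfl
    exact hi ⟨k, rfl⟩
  · intro i
    by_cases hi : i ∈ Set.range a
    · obtain ⟨k, rfl⟩ := hi
      exact ⟨.inl k, rfl⟩
    · exact ⟨.inr ⟨i, hi⟩, rfl⟩

open PowerSeries.WithPiTopology in
theorem hasSum_countSeries [TopologicalSpace R] {w : ι → ℕ} (hw : Northcott w) :
    HasSum (fun i => (X : R⟦X⟧) ^ w i) (countSeries R w) := by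
  rw [hasSum_iff_hasSum_coeff]
  intro n
  have hfin : {i | w i = n}.Finite := finite_fiber_of_northcott hw n
  have hcoeff (i : ι) : coeff n (X ^ w i : R⟦X⟧) = if w i = n then 1 else 0 := by
    simp only [coeff_X_pow, eq_comm]
  have hsum : coeff n (countSeries R w) = ∑ i ∈ hfin.toFinset, coeff n (X ^ w i : R⟦X⟧) := by
    rw [Finset.sum_congr rfl fun i hi => (hcoeff i).trans (if_pos (by simpa using hi)),
      Finset.sum_const, coeff_countSeries, nsmul_one, ← Set.ncard_eq_toFinset_card _ hfin]
    rfl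
  rw [hsum]
  refine hasSum_sum_of_ne_finset_zero fun i hi => (hcoeff i).trans (if_neg ?_)
  simpa using hi

end CountSeries

section Frobenius
variable {ι : Type*}

theorem expand_countSeries {R : Type*} [CommRing R] (w : ι → ℕ) {m : ℕ} (hm : m ≠ 0) :
    expand m hm (countSeries R w) = countSeries R fun i => m * w i := by
  ext n
  rw [coeff_expand]
  split_ifs with h
  · obtain ⟨k, rfl⟩ := h
    simp [coeff_countSeries, hm]
  · rw [coeff_countSeries_eq_zero]
    rintro i rfl
    exact h (dvd_mul_right _ _)

variable (p : ℕ) [Fact p.Prime]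

theorem countSeries_pow_prime (w : ι → ℕ) :
    countSeries (ZMod p) w ^ p = countSeries (ZMod p) fun i => p * w i := by
  have hp : p ≠ 0 := (Fact.out : p.Prime).ne_zero
  have h := MvPowerSeries.map_frobenius_expand (R := ZMod p) p hp (f := countSeries (ZMod p) w)
  rw [ZMod.frobenius_zmod] at h
  rw [← expand_countSeries w hp]
  exact h.symm.trans (by ext; rfl)

theorem countSeries_pow_prime_pow (k : ℕ) (w : ι → ℕ) :
    countSeries (ZMod p) w ^ p ^ k = countSeries (ZMod p) fun i => p ^ k * w i := by
  induction k with
  | zero => simp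
  | succ k ih =>
    simp only [pow_succ p, pow_mul, ih, countSeries_pow_prime, mul_left_comm, mul_assoc]

theorem countSeries_eq_countSeries_fixedPoints {w : ι → ℕ} (hw : Northcott w) {f : ι → ι}
    (hf : f^[p] = id) (hwf : ∀ i, w (f i) = w i) :
    countSeries (ZMod p) w = countSeries (ZMod p) fun i : fixedPoints f => w i := by
  ext n
  have := finite_fiber_of_northcott hw n
  have := Fintype.ofFinite {i // w i = n}
  let g : Function.End {i // w i = n} := Subtype.map f fun i hi => (hwf i).trans hi
  have hg : g ^ p ^ 1 = 1 := by
    rw [pow_one]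
    funext i
    have hval (k : ℕ) : ((g ^ k) i : ι) = f^[k] i := by
      induction k with
      | zero => rfl
      | succ k ih => rw [pow_succ', iterate_succ_apply', ← ih]; rfl
    exact Subtype.ext ((hval p).trans (congrFun hf i))
  let e : fixedPoints g ≃ {i : fixedPoints f // w i = n} :=
    { toFun := fun i => ⟨⟨i.1.1, congrArg Subtype.val i.2⟩, i.1.2⟩
      invFun := fun i => ⟨⟨i.1.1, i.2⟩, Subtype.ext i.1.2⟩ }
  classical
  rw [coeff_countSeries, coeff_countSeries, ZMod.natCast_eq_natCast_iff, ← Nat.card_congr e,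
    Nat.card_eq_fintype_card, Nat.card_eq_fintype_card]
  exact Equiv.Perm.card_fixedPoints_modEq hg

end Frobenius

/-- The triangular number `x * (x + 1) / 2` with an integer index. -/
def triangular (x : ℤ) : ℕ := (x * (x + 1) / 2).toNat

theorem two_mul_triangular (x : ℤ) : 2 * (triangular x : ℤ) = x * (x + 1) := by
  have hnonneg : 0 ≤ x * (x + 1) := by
    rcases le_or_gt 0 x with hx | hx <;> nlinarith
  rw [triangular, Int.toNat_of_nonneg (by omega)]
  exact Int.two_mul_ediv_two_of_even (Int.even_mul_succ_self x)

theorem triangular_natCast (k : ℕ) : triangular k = k * (k + 1) / 2 := by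
  rw [triangular]
  norm_cast

theorem triangular_negSucc (k : ℕ) : triangular (Int.negSucc k) = triangular k := by
  have h₁ := two_mul_triangular k
  have h₂ := two_mul_triangular (Int.negSucc k)
  rw [Int.negSucc_eq] at h₂ ⊢
  zify
  linarith

theorem triangular_three_mul_add_one (x : ℤ) : triangular (3 * x + 1) = 9 * triangular x + 1 := by
  have h₁ := two_mul_triangular (3 * x + 1)
  have h₂ := two_mul_triangular x
  zify
  linarith

theorem three_dvd_triangular {x : ℤ} (hx : x % 3 ≠ 1) : 3 ∣ triangular x := by
  have h : (3 : ℤ) ∣ 2 * triangular x := by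
    rw [two_mul_triangular]
    rcases (by omega : 3 ∣ x ∨ 3 ∣ x + 1) with h | h
    · exact h.mul_right _
    · exact h.mul_left _
  omega

theorem northcott_natAbs_of_le {w : ℤ → ℕ} (h : ∀ x, x.natAbs ≤ w x + 1) : Northcott w :=
  northcott_of_le_monotone_comp (g := (· + 1))
    ⟨fun b => (Set.finite_Icc (-b : ℤ) b).subset fun x (hx : x.natAbs ≤ b) => by
      rw [Set.mem_Icc]; omega⟩
    (fun _ _ => Nat.succ_le_succ) h

theorem northcott_natAbs_sq : Northcott fun x : ℤ => x.natAbs ^ 2 :=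
  northcott_natAbs_of_le fun _ => (Nat.le_self_pow two_ne_zero _).trans (Nat.le_succ _)

theorem northcott_triangular : Northcott triangular :=
  northcott_natAbs_of_le fun x => by
    have h := two_mul_triangular x
    zify
    rcases abs_cases x with ⟨hx, _⟩ | ⟨hx, _⟩ <;> rw [hx] <;> nlinarith

theorem northcott_triangular_natCast : Northcott fun k : ℕ => triangular k :=
  northcott_comp_injective northcott_triangular Nat.cast_injective

section Theta
variable (R : Type*) [CommRing R]

/-- Ramanujan's theta function `φ(q) = ∑_{x ∈ ℤ} q ^ x ^ 2`. -/
noncomputable def thetaPhi : R⟦X⟧ := countSeries R fun x : ℤ => x.natAbs ^ 2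

/-- Ramanujan's theta function `ψ(q) = ∑_{k ≥ 0} q ^ (k * (k + 1) / 2)`. -/
noncomputable def thetaPsi : R⟦X⟧ := countSeries R fun k : ℕ => triangular k

/-- The series `∑_{k ≥ 1} q ^ k ^ 2`, the nonconstant half of `φ(q)`. -/
noncomputable def posSquareSeries : R⟦X⟧ := countSeries R fun k : ℕ => (k + 1) ^ 2

theorem bijective_sumElim_natCast_negSucc : Bijective (Sum.elim ((↑) : ℕ → ℤ) Int.negSucc) := by
  convert! Equiv.intEquivNatSumNat.symm.bijective using 1

theorem northcott_succ_sq : Northcott fun k : ℕ => (k + 1) ^ 2 :=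
  northcott_comp_injective (northcott_comp_injective northcott_natAbs_sq Nat.cast_injective)
    Nat.succ_injective

theorem countSeries_triangular : countSeries R triangular = 2 * thetaPsi R := by
  rw [countSeries_eq_add northcott_triangular bijective_sumElim_natCast_negSucc, two_mul]
  simp only [triangular_negSucc]
  rfl

theorem thetaPhi_eq_one_add : thetaPhi R = 1 + 2 * posSquareSeries R := by
  have hzero : Bijective (Sum.elim (fun _ : Unit => 0) Nat.succ) := by
    convert! ((Equiv.sumComm _ _).trans Equiv.natSumPUnitEquivNat).bijective using 1
    ext (k | k) <;> rfl
  have hsq : Northcott fun k : ℕ => k ^ 2 :=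
    northcott_comp_injective northcott_natAbs_sq Nat.cast_injective
  rw [thetaPhi, countSeries_eq_add northcott_natAbs_sq bijective_sumElim_natCast_negSucc]
  simp only [Int.natAbs_natCast, Int.natAbs_negSucc]
  rw [countSeries_eq_add hsq hzero, countSeries_eq_X_pow]
  simp only [Nat.succ_eq_add_one, posSquareSeries]
  ring

theorem constantCoeff_thetaPhi : constantCoeff (thetaPhi R) = 1 := by
  have h : coeff 0 (posSquareSeries R) = 0 := coeff_countSeries_eq_zero fun k => by positivity
  rw [coeff_zero_eq_constantCoeff_apply] at h
  simp [thetaPhi_eq_one_add, h]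

theorem bijective_sumElim_add_sub :
    Bijective (Sum.elim (fun p : ℤ × ℤ => (p.2 + p.1, p.2 - p.1))
      fun p : ℤ × ℤ => (p.1 + p.2, p.1 - p.2 - 1)) := by
  constructor
  · rintro (⟨i, i'⟩ | ⟨i, i'⟩) (⟨j, j'⟩ | ⟨j, j'⟩) h <;>
      simp only [Sum.elim_inl, Sum.elim_inr, Prod.mk.injEq, Sum.inl.injEq, Sum.inr.injEq,
        reduceCtorEq] at h ⊢ <;> omega
  · rintro ⟨x, y⟩
    rcases Int.even_or_odd' (x - y) with ⟨c, hc | hc⟩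
    · exact ⟨.inl (c, x - c), by simp only [Sum.elim_inl, Prod.mk.injEq]; omega⟩
    · exact ⟨.inr (c + 1 + y, x - (c + 1 + y)), by simp only [Sum.elim_inr, Prod.mk.injEq]; omega⟩

/-- With `Ψ = 2 ψ` this is `Ψ(q) ^ 2 = 2 φ(q) Ψ(q ^ 2)`. -/
theorem countSeries_triangular_sq :
    countSeries R triangular ^ 2 =
      2 * (thetaPhi R * countSeries R fun x => 2 * triangular x) := by
  have hadd (p : ℤ × ℤ) : triangular (p.2 + p.1) + triangular (p.2 - p.1) =
      p.1.natAbs ^ 2 + 2 * triangular p.2 := by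
    have h₁ := two_mul_triangular (p.2 + p.1)
    have h₂ := two_mul_triangular (p.2 - p.1)
    have h₃ := two_mul_triangular p.2
    zify
    rw [sq_abs]
    linarith
  have hsub (p : ℤ × ℤ) : triangular (p.1 + p.2) + triangular (p.1 - p.2 - 1) =
      p.1.natAbs ^ 2 + 2 * triangular p.2 := by
    have h₁ := two_mul_triangular (p.1 + p.2)
    have h₂ := two_mul_triangular (p.1 - p.2 - 1)
    have h₃ := two_mul_triangular p.2
    zify
    rw [sq_abs]
    linarith
  rw [sq, countSeries_mul northcott_triangular northcott_triangular, thetaPhi,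
    countSeries_mul northcott_natAbs_sq (northcott_const_mul northcott_triangular two_ne_zero),
    two_mul, countSeries_eq_add (northcott_add northcott_triangular northcott_triangular)
      bijective_sumElim_add_sub]
  simp only [hadd, hsub]

end Theta

section Hurwitz

/-- The norm of the Hurwitz quaternion `a * (1 + i + j + k) / 2 + b * i + c * j + d * k`. -/
def hurwitzNorm (x : ℤ × ℤ × ℤ × ℤ) : ℕ :=
  let (a, b, c, d) := x
  (a ^ 2 + b ^ 2 + c ^ 2 + d ^ 2 + a * (b + c + d)).toNat

theorem four_mul_hurwitzNorm (a b c d : ℤ) :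
    4 * (hurwitzNorm (a, b, c, d) : ℤ) =
      a ^ 2 + (a + 2 * b) ^ 2 + (a + 2 * c) ^ 2 + (a + 2 * d) ^ 2 := by
  rw [hurwitzNorm, Int.toNat_of_nonneg]
  · ring
  · nlinarith [sq_nonneg a, sq_nonneg (a + 2 * b), sq_nonneg (a + 2 * c), sq_nonneg (a + 2 * d)]

/-- Left multiplication by the cube root of unity `(-1 + i + j + k) / 2`. -/
def hurwitzRotation (x : ℤ × ℤ × ℤ × ℤ) : ℤ × ℤ × ℤ × ℤ :=
  let (a, b, c, d) := x
  (-2 * a - b - c - d, a + d, a + b, a + c)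

theorem hurwitzNorm_hurwitzRotation (x : ℤ × ℤ × ℤ × ℤ) :
    hurwitzNorm (hurwitzRotation x) = hurwitzNorm x := by
  simp only [hurwitzNorm, hurwitzRotation]
  congr 1
  ring

theorem hurwitzRotation_iterate_three : hurwitzRotation^[3] = id := by
  funext ⟨a, b, c, d⟩
  simp only [iterate_succ, iterate_zero, comp_apply, id_eq, hurwitzRotation, Prod.mk.injEq]
  omega

theorem fixedPoints_hurwitzRotation : fixedPoints hurwitzRotation = {0} := by
  ext ⟨a, b, c, d⟩
  simp only [mem_fixedPoints, IsFixedPt, hurwitzRotation, Set.mem_singleton_iff, Prod.mk.injEq,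
    Prod.mk_eq_zero]
  omega

theorem bijective_sumElim_hurwitz :
    Bijective (Sum.elim
      (fun x : ℤ × ℤ × ℤ × ℤ => (2 * x.1, x.2.1 - x.1, x.2.2.1 - x.1, x.2.2.2 - x.1))
      fun x : ℤ × ℤ × ℤ × ℤ => (2 * x.1 + 1, x.2.1 - x.1, x.2.2.1 - x.1, x.2.2.2 - x.1)) := by
  constructor
  · rintro (⟨a, b, c, d⟩ | ⟨a, b, c, d⟩) (⟨a', b', c', d'⟩ | ⟨a', b', c', d'⟩) h <;>
      simp only [Sum.elim_inl, Sum.elim_inr, Prod.mk.injEq, Sum.inl.injEq, Sum.inr.injEq,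
        reduceCtorEq] at h ⊢ <;> omega
  · rintro ⟨a, b, c, d⟩
    rcases Int.even_or_odd' a with ⟨e, rfl | rfl⟩
    · exact ⟨.inl (e, b + e, c + e, d + e), by simp⟩
    · exact ⟨.inr (e, b + e, c + e, d + e), by simp⟩

theorem northcott_hurwitzNorm : Northcott hurwitzNorm := by
  have hsq := northcott_natAbs_sq
  have hinj : Injective fun x : ℤ × ℤ × ℤ × ℤ =>
      (x.1, x.1 + 2 * x.2.1, x.1 + 2 * x.2.2.1, x.1 + 2 * x.2.2.2) := by
    rintro ⟨a, b, c, d⟩ ⟨a', b', c', d'⟩ h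
    simp only [Prod.mk.injEq] at h ⊢
    omega
  refine northcott_of_le_monotone_comp (g := (4 * ·)) (northcott_comp_injective
    (northcott_add hsq (northcott_add hsq (northcott_add hsq hsq))) hinj)
    (fun _ _ => Nat.mul_le_mul_left 4) fun ⟨a, b, c, d⟩ => ?_
  have := four_mul_hurwitzNorm a b c d
  zify
  simp only [sq_abs]
  linarith

/-- The theta series of the Hurwitz order, split according to the integral and the half-integral
quaternions. -/
theorem countSeries_hurwitzNorm (R : Type*) [CommRing R] :
    countSeries R hurwitzNorm =
      thetaPhi R ^ 4 + X * countSeries R (fun x => 2 * triangular x) ^ 4 := by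
  have heven (e x y z : ℤ) : hurwitzNorm (2 * e, x - e, y - e, z - e) =
      e.natAbs ^ 2 + (x.natAbs ^ 2 + (y.natAbs ^ 2 + z.natAbs ^ 2)) := by
    have := four_mul_hurwitzNorm (2 * e) (x - e) (y - e) (z - e)
    zify
    simp only [sq_abs]
    linarith
  have hodd (e x y z : ℤ) : hurwitzNorm (2 * e + 1, x - e, y - e, z - e) =
      2 * triangular e + (2 * triangular x + (2 * triangular y + 2 * triangular z)) + 1 := by
    have := four_mul_hurwitzNorm (2 * e + 1) (x - e) (y - e) (z - e)
    zify
    simp only [two_mul_triangular]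
    linarith
  have hφ := northcott_natAbs_sq
  have hψ := northcott_const_mul northcott_triangular two_ne_zero
  rw [countSeries_eq_add northcott_hurwitzNorm bijective_sumElim_hurwitz]
  simp only [heven, hodd]
  rw [← X_mul_countSeries]
  have hpow (f : R⟦X⟧) : f ^ 4 = f * (f * (f * f)) := by ring
  rw [hpow, hpow, thetaPhi, countSeries_mul hφ hφ, countSeries_mul hφ (northcott_add hφ hφ),
    countSeries_mul hφ (northcott_add hφ (northcott_add hφ hφ)), countSeries_mul hψ hψ,
    countSeries_mul hψ (northcott_add hψ hψ),
    countSeries_mul hψ (northcott_add hψ (northcott_add hψ hψ))]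

theorem countSeries_zmod_three_hurwitzNorm : countSeries (ZMod 3) hurwitzNorm = 1 := by
  rw [countSeries_eq_countSeries_fixedPoints 3 northcott_hurwitzNorm
    hurwitzRotation_iterate_three hurwitzNorm_hurwitzRotation, fixedPoints_hurwitzRotation,
    countSeries_eq_X_pow]
  rfl

end Hurwitz

section EulerDerivation
variable {R : Type*} [CommRing R]

/-- The Euler derivation `X d/dX` of power series, which multiplies the coefficient of `X ^ n`
by `n`. -/
noncomputable def eulerDerivation (R : Type*) [CommRing R] : Derivation R R⟦X⟧ R⟦X⟧ :=
  (X : R⟦X⟧) • d⁄dX R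

theorem coeff_eulerDerivation (f : R⟦X⟧) (n : ℕ) :
    coeff n (eulerDerivation R f) = n * coeff n f := by
  rw [eulerDerivation, Derivation.smul_apply, smul_eq_mul]
  cases n with
  | zero => simp
  | succ n => rw [coeff_succ_X_mul, coeff_derivative, mul_comm, Nat.cast_succ]

theorem eulerDerivation_countSeries {p : ℕ} [CharP R p] {ι : Type*} {w : ι → ℕ} {k : ℕ}
    (h : ∀ i, w i ≡ k [MOD p]) :
    eulerDerivation R (countSeries R w) = (k : R) • countSeries R w := by
  ext n
  rw [coeff_eulerDerivation, coeff_smul, smul_eq_mul]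
  by_cases hn : ∃ i, w i = n
  · obtain ⟨i, rfl⟩ := hn
    rw [(CharP.natCast_eq_natCast R p).2 (h i)]
  · rw [coeff_countSeries_eq_zero (not_exists.1 hn), mul_zero, mul_zero]

end EulerDerivation

section ModThree

local notation "φ" => thetaPhi (ZMod 3)
local notation "ψ" => thetaPsi (ZMod 3)
local notation "θ" => eulerDerivation (ZMod 3)

theorem three_eq_zero_powerSeries : (3 : (ZMod 3)⟦X⟧) = 0 :=
  (map_ofNat (C (R := ZMod 3)) 3).symm.trans (map_zero _)

theorem countSeries_triangular_zmod_three : countSeries (ZMod 3) triangular = -ψ := by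
  linear_combination countSeries_triangular (ZMod 3) + ψ * three_eq_zero_powerSeries

theorem X_mul_thetaPsi_pow_eight : X * ψ ^ 8 = φ ^ 4 - φ ^ 8 := by
  have hψ := countSeries_triangular_sq (ZMod 3)
  have hH := countSeries_zmod_three_hurwitzNorm
  rw [countSeries_triangular_zmod_three, neg_sq] at hψ
  rw [countSeries_hurwitzNorm] at hH
  calc X * ψ ^ 8
      = 16 * φ ^ 4 * (X * countSeries (ZMod 3) (fun x => 2 * triangular x) ^ 4) := by
        rw [show 8 = 2 * 4 from rfl, pow_mul, hψ]; ring
    _ = 16 * φ ^ 4 * (1 - φ ^ 4) := by rw [← hH]; ring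
    _ = φ ^ 4 - φ ^ 8 := by
        linear_combination 5 * (φ ^ 4 - φ ^ 8) * three_eq_zero_powerSeries

theorem eulerDerivation_thetaPhi : θ (φ) = φ - φ ^ 9 := by
  have hsplit := countSeries_eq_add_compl_range (R := ZMod 3) northcott_natAbs_sq
    (a := fun x : ℤ => 3 * x) (mul_right_injective₀ three_ne_zero)
  have hpow : φ ^ 9 = countSeries (ZMod 3) fun x : ℤ => (3 * x).natAbs ^ 2 := by
    simp only [Int.natAbs_mul, mul_pow]
    exact countSeries_pow_prime_pow 3 2 _
  have hmultiple (x : ℤ) : (3 * x).natAbs ^ 2 ≡ 0 [MOD 3] := by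
    rw [Nat.modEq_zero_iff_dvd, Int.natAbs_mul]
    exact dvd_pow (dvd_mul_right 3 _) two_ne_zero
  have hrest (x : ↥(Set.range fun x : ℤ => 3 * x)ᶜ) : x.1.natAbs ^ 2 ≡ 1 [MOD 3] := by
    have hx : ¬ 3 ∣ x.1.natAbs := fun h => x.2 <| by
      obtain ⟨y, hy⟩ := Int.natCast_dvd.2 h
      exact ⟨y, hy.symm⟩
    exact Nat.ModEq.pow_card_sub_one_eq_one Nat.prime_three
      ((Nat.prime_three.coprime_iff_not_dvd.2 hx).symm)
  rw [hpow, thetaPhi, sub_eq_iff_eq_add'.2 hsplit]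
  conv_lhs => rw [hsplit]
  rw [map_add, eulerDerivation_countSeries hmultiple, eulerDerivation_countSeries hrest]
  simp

theorem eulerDerivation_thetaPsi : θ (ψ) = X * ψ ^ 9 := by
  have hsplit := countSeries_eq_add_compl_range (R := ZMod 3) northcott_triangular
    (a := fun x : ℤ => 3 * x + 1) fun x y h => by simpa using h
  have hpow : X * ψ ^ 9 = -countSeries (ZMod 3) fun x : ℤ => triangular (3 * x + 1) := by
    simp only [triangular_three_mul_add_one, ← X_mul_countSeries]
    have : countSeries (ZMod 3) triangular ^ 9 = countSeries (ZMod 3) fun x => 9 * triangular x :=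
      countSeries_pow_prime_pow 3 2 triangular
    rw [← this, countSeries_triangular_zmod_three]
    ring
  have hone (x : ℤ) : triangular (3 * x + 1) ≡ 1 [MOD 3] := by
    rw [triangular_three_mul_add_one, Nat.ModEq]
    omega
  have hzero (x : ↥(Set.range fun x : ℤ => 3 * x + 1)ᶜ) : triangular x ≡ 0 [MOD 3] := by
    refine Nat.modEq_zero_iff_dvd.2 (three_dvd_triangular fun hx => x.2 ⟨x / 3, ?_⟩)
    dsimp only
    omega
  rw [hpow, ← neg_eq_iff_eq_neg.2 countSeries_triangular_zmod_three, map_neg, hsplit, map_add,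
    eulerDerivation_countSeries hone, eulerDerivation_countSeries hzero]
  simp

variable {P : (ZMod 3)⟦X⟧}

theorem eulerDerivation_of_mul_thetaPhi_eq_thetaPsi (hP : P * φ = ψ) :
    θ P = P * (φ ^ 4 - 1) := by
  have hφ : φ ≠ 0 := fun h => by simpa [h] using constantCoeff_thetaPhi (ZMod 3)
  have hD := congrArg (θ) hP
  rw [Derivation.leibniz, eulerDerivation_thetaPhi, eulerDerivation_thetaPsi, smul_eq_mul,
    smul_eq_mul] at hD
  refine mul_right_cancel₀ hφ ?_
  linear_combination hD + ψ * X_mul_thetaPsi_pow_eight + (φ ^ 8 - φ ^ 4) * hP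

theorem eulerDerivation_sq_add_of_mul_thetaPhi_eq_thetaPsi (hP : P * φ = ψ) :
    θ (θ P) + θ P = X * ψ ^ 9 * φ ^ 3 := by
  rw [eulerDerivation_of_mul_thetaPhi_eq_thetaPsi hP, Derivation.leibniz, map_sub,
    Derivation.leibniz_pow, Derivation.map_one_eq_zero, eulerDerivation_thetaPhi,
    eulerDerivation_of_mul_thetaPhi_eq_thetaPsi hP]
  simp only [smul_eq_mul, nsmul_eq_mul]
  push_cast
  linear_combination (P * (φ ^ 4 - φ ^ 12)) * three_eq_zero_powerSeries +
    (φ ^ 7 - φ ^ 11) * hP - ψ * φ ^ 3 * X_mul_thetaPsi_pow_eight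

theorem sq_mod_three_ne_two (m : ℕ) : m ^ 2 % 3 ≠ 2 := by
  have : m % 3 = 0 ∨ m % 3 = 1 ∨ m % 3 = 2 := by omega
  rcases this with h | h | h <;> simp [Nat.pow_mod, h]

theorem coeff_eq_zero_of_mul_thetaPhi_eq_thetaPsi (hP : P * φ = ψ) {n : ℕ}
    (hn : n ≡ 7 [MOD 9]) : coeff n P = 0 := by
  have hvanish : coeff n (X * ψ ^ 9 * φ ^ 3) = 0 := by
    have hψ : ψ ^ 9 = countSeries (ZMod 3) fun k : ℕ => 9 * triangular k :=
      countSeries_pow_prime_pow 3 2 _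
    have hsum : Northcott fun k : ℕ => 9 * triangular k + 1 :=
      northcott_of_le_monotone_comp northcott_triangular_natCast monotone_id fun k =>
        show triangular k ≤ 9 * triangular k + 1 by omega
    rw [hψ, X_mul_countSeries, thetaPhi, countSeries_pow_prime,
      countSeries_mul hsum (northcott_const_mul northcott_natAbs_sq three_ne_zero)]
    refine coeff_countSeries_eq_zero fun ⟨k, x⟩ h => ?_
    have hx := sq_mod_three_ne_two x.natAbs
    simp only [Nat.ModEq] at hn h
    omega
  have hcoeff := congrArg (coeff n) (eulerDerivation_sq_add_of_mul_thetaPhi_eq_thetaPsi hP)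
  rw [hvanish, map_add, coeff_eulerDerivation, coeff_eulerDerivation] at hcoeff
  have hn' : (n : ZMod 3) = 1 := by
    exact_mod_cast (ZMod.natCast_eq_natCast_iff n 7 3).2 (hn.of_dvd (by norm_num : 3 ∣ 9))
  have h3 : (3 : ZMod 3) = 0 := rfl
  rw [hn'] at hcoeff
  linear_combination coeff n P * h3 - hcoeff

end ModThree

section ShanksIdentities
open Finset
variable {R : Type*} [CommRing R]

theorem sum_sq_mul_prod_one_add_pow (q : R) (n : ℕ) :
    (1 + 2 * ∑ j ∈ range n, (-1) ^ (j + 1) * q ^ (j + 1) ^ 2) * ∏ i ∈ range n, (1 + q ^ (i + 1)) =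
      ∏ i ∈ range n, (1 - q ^ (i + 1)) + 2 * ∑ s ∈ range n, (-1) ^ (s + 1) *
        q ^ ((s + 1) * (n + 1)) * (∏ i ∈ range s, (1 + q ^ (i + 1))) *
        ∏ i ∈ Ico (s + 1) n, (1 - q ^ (i + 1)) := by
  induction n with
  | zero => simp
  | succ n ih =>
    -- Telescopes the change of the right-hand sum from `n` to `n + 1`.
    let g : ℕ → R := fun s => (-1) ^ (s + 1) * q ^ ((s + 1) * (n + 1)) *
      (∏ i ∈ range s, (1 + q ^ (i + 1))) * ∏ i ∈ Ico s n, (1 - q ^ (i + 1))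
    have hg_zero : g 0 = -q ^ (n + 1) * ∏ i ∈ range n, (1 - q ^ (i + 1)) := by simp [g]
    have hg_last : g n = (-1) ^ (n + 1) * q ^ ((n + 1) * (n + 1)) *
        ∏ i ∈ range n, (1 + q ^ (i + 1)) := by simp [g]
    have hstep : ∑ s ∈ range n, (-1) ^ (s + 1) * q ^ ((s + 1) * (n + 1 + 1)) *
        (∏ i ∈ range s, (1 + q ^ (i + 1))) * ∏ i ∈ Ico (s + 1) (n + 1), (1 - q ^ (i + 1)) =
        (1 + q ^ (n + 1)) * (∑ s ∈ range n, (-1) ^ (s + 1) * q ^ ((s + 1) * (n + 1)) *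
        (∏ i ∈ range s, (1 + q ^ (i + 1))) * ∏ i ∈ Ico (s + 1) n, (1 - q ^ (i + 1))) +
        (g n - g 0) := by
      rw [← sum_range_sub g n, mul_sum, ← sum_add_distrib]
      refine sum_congr rfl fun s hs => ?_
      have hs' : s < n := mem_range.1 hs
      simp only [g]
      rw [prod_Ico_succ_top (by omega : s + 1 ≤ n), prod_range_succ,
        prod_eq_prod_Ico_succ_bot hs']
      ring
    rw [sum_range_succ _ n, sum_range_succ _ n, hstep, prod_range_succ, prod_range_succ, hg_zero,
      hg_last, Ico_self, prod_empty]
    linear_combination (1 + q ^ (n + 1)) * ih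

theorem prod_one_sub_odd_pow_mul_sum_triangular (q : R) (n : ℕ) :
    (∏ i ∈ range n, (1 - q ^ (2 * i + 1))) * ∑ j ∈ range (2 * n + 1), q ^ triangular j =
      ∑ s ∈ range (n + 1), q ^ (s * (2 * n + 1)) * (∏ i ∈ range s, (1 - q ^ (2 * i + 1))) *
        ∏ i ∈ Ico s n, (1 - q ^ (2 * i + 2)) := by
  induction n with
  | zero => simp [triangular]
  | succ n ih =>
    -- Telescopes the change of the right-hand sum from `n` to `n + 1`.
    let g : ℕ → R := fun s => q ^ (s * (2 * n + 1)) * (1 - q ^ (2 * s)) *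
      (∏ i ∈ range s, (1 - q ^ (2 * i + 1))) * ∏ i ∈ Ico s n, (1 - q ^ (2 * i + 2))
    have hg_zero : g 0 = 0 := by simp [g]
    have hg_last : g n = q ^ (n * (2 * n + 1)) * (1 - q ^ (2 * n)) *
        ∏ i ∈ range n, (1 - q ^ (2 * i + 1)) := by simp [g]
    have hstep : ∑ s ∈ range n, q ^ (s * (2 * (n + 1) + 1)) *
        (∏ i ∈ range s, (1 - q ^ (2 * i + 1))) * ∏ i ∈ Ico s (n + 1), (1 - q ^ (2 * i + 2)) =
        (1 - q ^ (2 * n + 1)) * (∑ s ∈ range n, q ^ (s * (2 * n + 1)) *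
        (∏ i ∈ range s, (1 - q ^ (2 * i + 1))) * ∏ i ∈ Ico s n, (1 - q ^ (2 * i + 2))) +
        (g n - g 0) := by
      rw [← sum_range_sub g n, mul_sum, ← sum_add_distrib]
      refine sum_congr rfl fun s hs => ?_
      have hs' : s < n := mem_range.1 hs
      simp only [g]
      rw [prod_Ico_succ_top hs'.le, prod_range_succ, prod_eq_prod_Ico_succ_bot hs']
      ring
    have htri_odd : triangular ↑(2 * n + 1) = (n + 1) * (2 * n + 1) := by
      rw [triangular_natCast]
      exact Nat.div_eq_of_eq_mul_right two_pos (by ring)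
    have htri_even : triangular ↑(2 * n + 1 + 1) = (n + 1) * (2 * n + 3) := by
      rw [triangular_natCast]
      exact Nat.div_eq_of_eq_mul_right two_pos (by ring)
    rw [sum_range_succ _ n, Ico_self, prod_empty, mul_one] at ih
    rw [sum_range_succ _ (n + 1), sum_range_succ _ n, hstep, hg_zero, hg_last,
      show 2 * (n + 1) + 1 = 2 * n + 1 + 1 + 1 by ring, sum_range_succ, sum_range_succ, htri_odd,
      htri_even, prod_Ico_succ_top le_rfl, Ico_self, Ico_self, prod_empty, prod_range_succ]
    linear_combination (1 - q ^ (2 * n + 1)) * ih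

end ShanksIdentities

section InfiniteProducts
open Finset Filter Topology PowerSeries.WithPiTopology
variable {R : Type*} [CommRing R] [TopologicalSpace R]

theorem tendsto_zero_of_X_pow_dvd {u : ℕ → R⟦X⟧} (hu : ∀ n, X ^ n ∣ u n) :
    Tendsto u atTop (𝓝 0) := by
  refine (tendsto_iff_coeff_tendsto _ _ _ _).2 fun d => tendsto_const_nhds.congr' ?_
  filter_upwards [eventually_gt_atTop d] with n hn
  rw [map_zero, X_pow_dvd_iff.1 (hu n) d hn]

theorem multipliable_one_add_of_X_pow_dvd {u : ℕ → R⟦X⟧} (hu : ∀ i, X ^ (i + 1) ∣ u i) :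
    Multipliable fun i => 1 + u i := by
  refine multipliable_one_add_of_tendsto_order_atTop_nhds_top _
    (ENat.tendsto_nhds_top_iff_natCast_lt.2 fun n => ?_)
  filter_upwards [eventually_ge_atTop n] with i hi
  exact (Nat.cast_lt.2 (Nat.lt_succ_of_le hi)).trans_le
    (nat_le_order _ _ (X_pow_dvd_iff.1 (hu i)))

theorem multipliable_one_sub_of_X_pow_dvd {u : ℕ → R⟦X⟧} (hu : ∀ i, X ^ (i + 1) ∣ u i) :
    Multipliable fun i => 1 - u i := by
  simpa only [sub_eq_add_neg] using
    multipliable_one_add_of_X_pow_dvd fun i => (dvd_neg.2 (hu i) : X ^ (i + 1) ∣ -u i)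

theorem isUnit_tprod_one_add_of_X_pow_dvd [T2Space R] {u : ℕ → R⟦X⟧}
    (hu : ∀ i, X ^ (i + 1) ∣ u i) : IsUnit (∏' i, (1 + u i)) := by
  have hconst (i : ℕ) : constantCoeff (1 + u i) = 1 := by
    rw [map_add, map_one, X_dvd_iff.1 ((dvd_pow_self X i.succ_ne_zero).trans (hu i)), add_zero]
  rw [isUnit_iff_constantCoeff, (multipliable_one_add_of_X_pow_dvd hu).map_tprod _
    (continuous_constantCoeff R)]
  simp only [hconst, tprod_one, isUnit_one]

theorem continuous_rescale [IsTopologicalRing R] (r : R) : Continuous (rescale r : R⟦X⟧ → R⟦X⟧) :=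
  continuous_iff_continuousAt.2 fun f => (tendsto_iff_coeff_tendsto _ _ _ _).2 fun d => by
    simpa only [coeff_rescale] using ((continuous_coeff R d).tendsto f).const_mul (r ^ d)

variable [IsTopologicalRing R] [T2Space R]

theorem tprod_one_add_eq_even_mul_odd {u : ℕ → R⟦X⟧} (hu : ∀ i, X ^ (i + 1) ∣ u i) :
    ∏' i, (1 + u i) = (∏' i, (1 + u (2 * i))) * ∏' i, (1 + u (2 * i + 1)) :=
  (tprod_even_mul_odd (f := fun i => 1 + u i)
    (multipliable_one_add_of_X_pow_dvd fun i => (pow_dvd_pow X (by omega)).trans (hu (2 * i)))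
    (multipliable_one_add_of_X_pow_dvd fun i =>
      (pow_dvd_pow X (by omega)).trans (hu (2 * i + 1)))).symm

theorem tprod_one_sub_eq_even_mul_odd {u : ℕ → R⟦X⟧} (hu : ∀ i, X ^ (i + 1) ∣ u i) :
    ∏' i, (1 - u i) = (∏' i, (1 - u (2 * i))) * ∏' i, (1 - u (2 * i + 1)) := by
  simpa only [sub_eq_add_neg] using tprod_one_add_eq_even_mul_odd fun i => dvd_neg.2 (hu i)

theorem thetaPhi_mul_tprod_one_add_neg_X_pow :
    thetaPhi R * ∏' i, (1 + (-X) ^ (i + 1)) = ∏' i, (1 - (-X) ^ (i + 1)) := by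
  have hdvd (m : ℕ) : (X : R⟦X⟧) ^ m ∣ (-X) ^ m := pow_dvd_pow_of_dvd (dvd_neg.2 dvd_rfl) m
  have hsign (j : ℕ) : (-1) ^ (j + 1) * (-X : R⟦X⟧) ^ (j + 1) ^ 2 = X ^ (j + 1) ^ 2 := by
    rw [neg_pow X, ← mul_assoc, ← pow_add, Even.neg_one_pow, one_mul]
    simpa [sq, mul_add, add_comm] using Nat.even_mul_succ_self (j + 1)
  have hphi : Tendsto (fun n => 1 + 2 * ∑ j ∈ range n, (X : R⟦X⟧) ^ (j + 1) ^ 2) atTop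
      (𝓝 (thetaPhi R)) := by
    rw [thetaPhi_eq_one_add]
    exact ((hasSum_countSeries northcott_succ_sq).tendsto_sum_nat.const_mul 2).const_add 1
  have herror : Tendsto (fun n => 2 * ∑ s ∈ range n, (-1) ^ (s + 1) *
      (-X) ^ ((s + 1) * (n + 1)) * (∏ i ∈ range s, (1 + (-X) ^ (i + 1))) *
      ∏ i ∈ Ico (s + 1) n, (1 - (-X) ^ (i + 1) : R⟦X⟧)) atTop (𝓝 0) :=
    tendsto_zero_of_X_pow_dvd fun n => .mul_left (dvd_sum fun s _ =>
      ((((pow_dvd_pow X (by nlinarith)).trans (hdvd _)).mul_left _).mul_right _).mul_right _) 2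
  have hadd := (multipliable_one_add_of_X_pow_dvd fun i => hdvd (i + 1)).hasProd.tendsto_prod_nat
  have hsub := (multipliable_one_sub_of_X_pow_dvd fun i => hdvd (i + 1)).hasProd.tendsto_prod_nat
  rw [← add_zero (∏' i, (1 - (-X) ^ (i + 1)))]
  refine tendsto_nhds_unique (hphi.mul hadd) ((hsub.add herror).congr fun n => ?_)
  rw [← sum_sq_mul_prod_one_add_pow]
  simp only [hsign]

theorem thetaPhi_mul_tprod_one_sub_X_pow_odd_mul_one_add_X_pow_even :
    thetaPhi R * ((∏' i, (1 - X ^ (2 * i + 1))) * ∏' i, (1 + X ^ (2 * i + 2))) =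
      (∏' i, (1 + X ^ (2 * i + 1))) * ∏' i, (1 - X ^ (2 * i + 2)) := by
  have hdvd (i : ℕ) : (X : R⟦X⟧) ^ (i + 1) ∣ (-X) ^ (i + 1) :=
    pow_dvd_pow_of_dvd (dvd_neg.2 dvd_rfl) _
  have hodd (i : ℕ) : (-X : R⟦X⟧) ^ (2 * i + 1) = -X ^ (2 * i + 1) :=
    (odd_two_mul_add_one i).neg_pow X
  have heven (i : ℕ) : (-X : R⟦X⟧) ^ (2 * i + 1 + 1) = X ^ (2 * i + 2) :=
    Even.neg_pow ⟨i + 1, by ring⟩ X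
  have h := thetaPhi_mul_tprod_one_add_neg_X_pow (R := R)
  rw [tprod_one_add_eq_even_mul_odd hdvd, tprod_one_sub_eq_even_mul_odd hdvd] at h
  simpa only [hodd, heven, ← sub_eq_add_neg, sub_neg_eq_add] using h

theorem thetaPsi_mul_tprod_one_sub_X_pow_odd :
    thetaPsi R * ∏' i, (1 - X ^ (2 * i + 1)) = ∏' i, (1 - X ^ (2 * i + 2)) := by
  have hpsi : Tendsto (fun n => ∑ j ∈ range (2 * n + 1), (X : R⟦X⟧) ^ triangular j) atTop
      (𝓝 (thetaPsi R)) :=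
    (hasSum_countSeries northcott_triangular_natCast).tendsto_sum_nat.comp
      (tendsto_atTop_mono (fun n => by omega : ∀ n, n ≤ 2 * n + 1) tendsto_id)
  have herror : Tendsto (fun n => ∑ s ∈ range n, X ^ ((s + 1) * (2 * n + 1)) *
      (∏ i ∈ range (s + 1), (1 - X ^ (2 * i + 1))) *
      ∏ i ∈ Ico (s + 1) n, (1 - X ^ (2 * i + 2) : R⟦X⟧)) atTop (𝓝 0) :=
    tendsto_zero_of_X_pow_dvd fun n => dvd_sum fun s _ =>
      ((pow_dvd_pow X (by nlinarith)).mul_right _).mul_right _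
  have hodd := (multipliable_one_sub_of_X_pow_dvd (u := fun i => (X : R⟦X⟧) ^ (2 * i + 1))
    fun i => pow_dvd_pow X (by omega)).hasProd.tendsto_prod_nat
  have heven := (multipliable_one_sub_of_X_pow_dvd (u := fun i => (X : R⟦X⟧) ^ (2 * i + 2))
    fun i => pow_dvd_pow X (by omega)).hasProd.tendsto_prod_nat
  rw [mul_comm, ← zero_add (∏' i, (1 - X ^ (2 * i + 2)))]
  refine tendsto_nhds_unique (hodd.mul hpsi) ((herror.add heven).congr fun n => ?_)
  rw [prod_one_sub_odd_pow_mul_sum_triangular, sum_range_succ']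
  simp

end InfiniteProducts

section GeneratingFunction
open Finset Filter Topology PowerSeries.WithPiTopology
variable (R : Type*) [CommRing R]

/-- The generating function of `ped`. -/
noncomputable def pedSeries : R⟦X⟧ := PowerSeries.mk fun n => (ped n : R)

theorem hasProd_pedSeries [TopologicalSpace R] [IsTopologicalRing R] [T2Space R] :
    HasProd (fun i => if Even (i + 1) then 1 + X ^ (i + 1) else ∑' j, X ^ ((i + 1) * j))
      (pedSeries R) := by
  convert! Nat.Partition.hasProd_genFun (fun i c => if Even i → c ≤ 1 then (1 : R) else 0) using 1
  · ext1 i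
    split_ifs with hi
    · rw [tsum_eq_single 0 fun j hj => by simp [hi, hj]]
      simp
    · have hsum : Summable fun j => (X : R⟦X⟧) ^ ((i + 1) * j) := by
        simpa only [pow_mul] using
          summable_pow_of_constantCoeff_eq_zero (f := (X : R⟦X⟧) ^ (i + 1)) (by simp)
      simp [hsum.tsum_eq_zero_add, hi]
  · simp_rw [pedSeries, ped, Nat.Partition.genFun, Fintype.card_subtype, card_filter, Finsupp.prod,
      prod_boole]
    simp

theorem pedSeries_mul_tprod_one_sub_X_pow_odd [TopologicalSpace R] [IsTopologicalRing R]
    [T2Space R] :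
    pedSeries R * ∏' i, (1 - X ^ (2 * i + 1)) = ∏' i, (1 + X ^ (2 * i + 2)) := by
  have hodd : HasProd (fun i => if Even (i + 1) then 1 else 1 - X ^ (i + 1) : ℕ → R⟦X⟧)
      (∏' i, (1 - X ^ (2 * i + 1))) := by
    rw [← mul_one (∏' i, _)]
    refine HasProd.even_mul_odd ?_ ?_
    · simpa [Nat.even_add_one] using (multipliable_one_sub_of_X_pow_dvd fun i =>
        pow_dvd_pow (X : R⟦X⟧) (by omega : i + 1 ≤ 2 * i + 1)).hasProd
    · simp [Nat.even_add_one]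
  have heven : HasProd (fun i => if Even (i + 1) then 1 + X ^ (i + 1) else 1 : ℕ → R⟦X⟧)
      (∏' i, (1 + X ^ (2 * i + 2))) := by
    rw [← one_mul (∏' i, _)]
    refine HasProd.even_mul_odd ?_ ?_
    · simp
    · simpa [Nat.even_add_one] using (multipliable_one_add_of_X_pow_dvd fun i =>
        pow_dvd_pow (X : R⟦X⟧) (by omega : i + 1 ≤ 2 * i + 2)).hasProd
  refine ((hasProd_pedSeries R).mul hodd).unique ?_
  convert! heven using 2 with i
  split_ifs with hi
  · rw [mul_one]
  · simp_rw [pow_mul]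
    exact tsum_pow_mul_one_sub_of_constantCoeff_eq_zero (by simp)

theorem rescale_pedSeries_mul_tprod_one_add_X_pow_odd [TopologicalSpace R] [IsTopologicalRing R]
    [T2Space R] :
    rescale (-1) (pedSeries R) * ∏' i, (1 + X ^ (2 * i + 1)) = ∏' i, (1 + X ^ (2 * i + 2)) := by
  have hX : rescale (-1 : R) X = -X := by simp [rescale_X]
  have hodd (i : ℕ) : rescale (-1 : R) (1 - X ^ (2 * i + 1)) = 1 + X ^ (2 * i + 1) := by
    rw [map_sub, map_one, map_pow, hX, (odd_two_mul_add_one i).neg_pow, sub_neg_eq_add]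
  have heven (i : ℕ) : rescale (-1 : R) (1 + X ^ (2 * i + 2)) = 1 + X ^ (2 * i + 2) := by
    rw [map_add, map_one, map_pow, hX, Even.neg_pow ⟨i + 1, by ring⟩]
  have h := congrArg (rescale (-1)) (pedSeries_mul_tprod_one_sub_X_pow_odd R)
  have hsub := multipliable_one_sub_of_X_pow_dvd fun i =>
    pow_dvd_pow (X : R⟦X⟧) (by omega : i + 1 ≤ 2 * i + 1)
  have hadd := multipliable_one_add_of_X_pow_dvd fun i =>
    pow_dvd_pow (X : R⟦X⟧) (by omega : i + 1 ≤ 2 * i + 2)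
  rw [map_mul, hsub.map_tprod _ (continuous_rescale (-1)),
    hadd.map_tprod _ (continuous_rescale (-1))] at h
  simpa only [hodd, heven] using h

theorem rescale_pedSeries_mul_thetaPhi :
    rescale (-1) (pedSeries R) * thetaPhi R = thetaPsi R := by
  let _ : TopologicalSpace R := ⊥
  have _ : DiscreteTopology R := ⟨rfl⟩
  have hunit : IsUnit ((∏' i, (1 - X ^ (2 * i + 1))) * ∏' i, (1 + X ^ (2 * i + 1)) : R⟦X⟧) := by
    have hdvd (i : ℕ) : (X : R⟦X⟧) ^ (i + 1) ∣ X ^ (2 * i + 1) := pow_dvd_pow X (by omega)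
    simpa only [sub_eq_add_neg] using
      (isUnit_tprod_one_add_of_X_pow_dvd fun i => dvd_neg.2 (hdvd i)).mul
        (isUnit_tprod_one_add_of_X_pow_dvd hdvd)
  refine hunit.mul_right_cancel ?_
  linear_combination thetaPhi R * (∏' i, (1 - X ^ (2 * i + 1))) *
      rescale_pedSeries_mul_tprod_one_add_X_pow_odd R +
    thetaPhi_mul_tprod_one_sub_X_pow_odd_mul_one_add_X_pow_even (R := R) -
    (∏' i, (1 + X ^ (2 * i + 1))) * thetaPsi_mul_tprod_one_sub_X_pow_odd (R := R)

end GeneratingFunction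

section ModEight

theorem eight_mul_triangular_add_one (k : ℕ) : 8 * triangular k + 1 = (2 * k + 1) ^ 2 := by
  have h := two_mul_triangular k
  zify
  linear_combination 4 * h

theorem even_coeff_thetaPsi_mul_posSquareSeries_sq {n : ℕ}
    (hn : ∀ x y : ℕ, x ^ 2 + 16 * y ^ 2 ≠ 8 * n + 1) :
    Even (coeff n (thetaPsi ℤ * posSquareSeries ℤ ^ 2)) := by
  have hmap : PowerSeries.map (Int.castRingHom (ZMod 2)) (thetaPsi ℤ * posSquareSeries ℤ ^ 2) =
      thetaPsi (ZMod 2) * countSeries (ZMod 2) fun k => 2 * (k + 1) ^ 2 := by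
    rw [map_mul, map_pow, thetaPsi, posSquareSeries, map_countSeries, map_countSeries,
      countSeries_pow_prime]
    rfl
  rw [← ZMod.intCast_eq_zero_iff_even, ← eq_intCast (Int.castRingHom _),
    ← coeff_map, hmap, thetaPsi,
    countSeries_mul northcott_triangular_natCast
      (northcott_const_mul northcott_succ_sq two_ne_zero)]
  refine coeff_countSeries_eq_zero fun ⟨k, x⟩ h => hn (2 * k + 1) (x + 1) ?_
  rw [← eight_mul_triangular_add_one]
  dsimp only at h
  omega

theorem eight_dvd_coeff_of_mul_thetaPhi_eq_thetaPsi {P : ℤ⟦X⟧} (hP : P * thetaPhi ℤ = thetaPsi ℤ)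
    {n : ℕ} (h₈ : ∀ x y : ℕ, x ^ 2 + 8 * y ^ 2 ≠ 8 * n + 1)
    (h₁₆ : ∀ x y : ℕ, x ^ 2 + 16 * y ^ 2 ≠ 8 * n + 1) : 8 ∣ coeff n P := by
  have hexpand : P = thetaPsi ℤ - C 2 * (thetaPsi ℤ * posSquareSeries ℤ) +
      C 4 * (thetaPsi ℤ * posSquareSeries ℤ ^ 2) - C 8 * (P * posSquareSeries ℤ ^ 3) := by
    rw [thetaPhi_eq_one_add] at hP
    simp only [map_ofNat]
    linear_combination (1 - 2 * posSquareSeries ℤ + 4 * posSquareSeries ℤ ^ 2) * hP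
  have hzero : coeff n (thetaPsi ℤ) = 0 := by
    refine coeff_countSeries_eq_zero fun k h => h₈ (2 * k + 1) 0 ?_
    rw [← eight_mul_triangular_add_one]
    omega
  have hone : coeff n (thetaPsi ℤ * posSquareSeries ℤ) = 0 := by
    rw [thetaPsi, posSquareSeries, countSeries_mul northcott_triangular_natCast northcott_succ_sq]
    refine coeff_countSeries_eq_zero fun ⟨k, x⟩ h => h₈ (2 * k + 1) (x + 1) ?_
    rw [← eight_mul_triangular_add_one]
    dsimp only at h
    omega
  obtain ⟨c, hc⟩ := even_coeff_thetaPsi_mul_posSquareSeries_sq h₁₆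
  rw [hexpand, map_sub, map_add, map_sub, coeff_C_mul, coeff_C_mul, coeff_C_mul, hzero, hone, hc]
  exact ⟨c - coeff n (P * posSquareSeries ℤ ^ 3), by ring⟩

end ModEight

theorem dvd_ped_iff_coeff_eq_zero {m n : ℕ} :
    m ∣ ped n ↔ coeff n (rescale (-1) (pedSeries (ZMod m))) = 0 := by
  rw [coeff_rescale, pedSeries, coeff_mk, ← ZMod.natCast_eq_zero_iff,
    ((isUnit_one.neg).pow n).mul_right_eq_zero]

theorem sq_add_mul_sq_ne_of_legendreSym_eq_neg_one {p : ℕ} [Fact p.Prime] {d N : ℕ}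
    (hd : legendreSym p (-d) = -1) (hN : p ∣ N) (hN' : ¬p ^ 2 ∣ N) (x y : ℕ) :
    x ^ 2 + d * y ^ 2 ≠ N := by
  rintro rfl
  obtain ⟨hx, hy⟩ := legendreSym.prime_dvd_of_eq_neg_one hd (x := x) (y := y)
    (by simpa using Int.natCast_dvd_natCast.2 hN)
  rw [Int.natCast_dvd_natCast] at hx hy
  exact hN' (dvd_add (pow_dvd_pow_of_dvd hx 2) ((pow_dvd_pow_of_dvd hy 2).mul_left d))

theorem three_dvd_ped {n : ℕ} (hn : n ≡ 7 [MOD 9]) : 3 ∣ ped n :=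
  dvd_ped_iff_coeff_eq_zero.2
    (coeff_eq_zero_of_mul_thetaPhi_eq_thetaPsi (rescale_pedSeries_mul_thetaPhi _) hn)

theorem eight_dvd_ped {n : ℕ} (h₈ : ∀ x y : ℕ, x ^ 2 + 8 * y ^ 2 ≠ 8 * n + 1)
    (h₁₆ : ∀ x y : ℕ, x ^ 2 + 16 * y ^ 2 ≠ 8 * n + 1) : 8 ∣ ped n := by
  have h := eight_dvd_coeff_of_mul_thetaPhi_eq_thetaPsi (rescale_pedSeries_mul_thetaPhi ℤ) h₈ h₁₆
  rw [coeff_rescale, pedSeries, coeff_mk, ((isUnit_one.neg).pow n).dvd_mul_left] at h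
  exact_mod_cast h

theorem ped_225n_add_133_general {n : ℕ} (hn : n ≡ 7 [MOD 9])
    (h₈ : ∀ x y : ℕ, x ^ 2 + 8 * y ^ 2 ≠ 8 * n + 1) : ped n ≡ 0 [MOD 24] := by
  have h₁₆ : ∀ x y : ℕ, x ^ 2 + 16 * y ^ 2 ≠ 8 * n + 1 := by
    rw [Nat.ModEq] at hn
    exact sq_add_mul_sq_ne_of_legendreSym_eq_neg_one (p := 3) (d := 16) (by decide) (by omega)
      (by omega)
  exact Nat.modEq_zero_iff_dvd.2
    (Nat.Coprime.mul_dvd_of_dvd_of_dvd (by norm_num) (eight_dvd_ped h₈ h₁₆) (three_dvd_ped hn))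

theorem ped_225n_add_133 (n : ℕ) : ped (225 * n + 133) ≡ 0 [MOD 24] :=
  have : Fact (Nat.Prime 5) := ⟨Nat.prime_five⟩
  ped_225n_add_133_general (by simp only [Nat.ModEq]; omega)
    (sq_add_mul_sq_ne_of_legendreSym_eq_neg_one (p := 5) (d := 8)
      ((legendreSym.eq_neg_one_iff 5).2 (by decide +revert)) (by omega) (by omega))
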